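/- For every h > 0 and t ∈ (0,1), the partial derivative with respect to t of Φ_high(h,t) = 2h e^{−2h²} erfc( h(1−2t)/√(2t(1−t)) ) equals √(2/π) · h² / √(t³(1−t)³) · exp( −h²/(2t(1−t)) ), where erfc(x) = (2/√π) ∫_x^∞ e^{−u²} du. -/

import Mathlib

open Real MeasureTheory Set

noncomputable def erfc (x : ℝ) : ℝ := (2 / Real.sqrt π) * ∫ u in Ioi x, Real.exp (-u ^ 2)

theorem integrable_aux : Integrable (fun u : ℝ => Real.exp (-u ^ 2)) := by
  have := integrable_exp_neg_mul_sq (b := 1) one_pos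
  simpa using this

theorem erfc_hasDerivAt (x : ℝ) :
    HasDerivAt erfc ((2 / Real.sqrt π) * (-Real.exp (-x ^ 2))) x := by
  have hc : Continuous (fun u : ℝ => Real.exp (-u ^ 2)) := by fun_prop
  have key : ∀ y : ℝ, ∫ u in Ioi y, Real.exp (-u ^ 2) =
      (∫ u in Ioi (0:ℝ), Real.exp (-u ^ 2)) - ∫ u in (0:ℝ)..y, Real.exp (-u ^ 2) := by
    intro y
    have := intervalIntegral.integral_interval_add_Ioi
      (integrable_aux.integrableOn (s := Ioi (0:ℝ))) (integrable_aux.integrableOn (s := Ioi y))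
    linarith
  have e : erfc = fun y => (2 / Real.sqrt π) *
      ((∫ u in Ioi (0:ℝ), Real.exp (-u ^ 2)) - ∫ u in (0:ℝ)..y, Real.exp (-u ^ 2)) := by
    funext y
    rw [erfc, key]
  rw [e]
  exact ((hc.integral_hasStrictDerivAt 0 x).hasDerivAt.const_sub _).const_mul _

theorem stmt_13 (h t : ℝ) (hh : 0 < h) (ht : t ∈ Ioo (0:ℝ) 1) :
    deriv
        (fun t' => 2 * h * Real.exp (-2 * h ^ 2) *
          erfc (h * (1 - 2 * t') / Real.sqrt (2 * t' * (1 - t')))) t =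
      Real.sqrt (2 / π) * h ^ 2 / Real.sqrt (t ^ 3 * (1 - t) ^ 3) *
        Real.exp (-h ^ 2 / (2 * t * (1 - t))) := by
  obtain ⟨h0, h1⟩ := ht
  have h1' : 0 < 1 - t := by linarith
  have hp : 0 < t * (1 - t) := mul_pos h0 h1'
  have hs : 0 < 2 * t * (1 - t) := by positivity
  have hr : 0 < Real.sqrt (t * (1 - t)) := Real.sqrt_pos.2 hp
  have hr2 : Real.sqrt (t * (1 - t)) ^ 2 = t * (1 - t) := Real.sq_sqrt hp.le
  have hq2 : Real.sqrt (2 * t * (1 - t)) ^ 2 = 2 * t * (1 - t) := Real.sq_sqrt hs.le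
  have hq : 0 < Real.sqrt (2 * t * (1 - t)) := Real.sqrt_pos.2 hs
  have hqr : Real.sqrt (2 * t * (1 - t)) = Real.sqrt 2 * Real.sqrt (t * (1 - t)) := by
    rw [mul_assoc, Real.sqrt_mul (by norm_num)]
  have h3 : Real.sqrt (t ^ 3 * (1 - t) ^ 3) = Real.sqrt (t * (1 - t)) ^ 3 := by
    rw [← mul_pow, Real.sqrt_eq_iff_mul_self_eq (by positivity) (by positivity)]
    calc (t * (1 - t)) ^ 3 = (Real.sqrt (t * (1 - t)) ^ 2) ^ 3 := by rw [hr2]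
      _ = _ := by ring
  have d1 : HasDerivAt (fun t' : ℝ => h * (1 - 2 * t')) (h * (-2)) t := by
    have := (((hasDerivAt_id t).const_mul 2).const_sub 1).const_mul h
    simpa using this
  have d2 : HasDerivAt (fun t' : ℝ => 2 * t' * (1 - t')) (2 * (1 - 2 * t)) t := by
    have := ((hasDerivAt_id t).const_mul 2).mul ((hasDerivAt_id t).const_sub 1)
    refine this.congr_deriv ?_
    simp only [id]; ring
  have d3 : HasDerivAt (fun t' => h * (1 - 2 * t') / Real.sqrt (2 * t' * (1 - t')))
      (-h / Real.sqrt (2 * t * (1 - t)) ^ 3) t := by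
    refine (d1.div (d2.sqrt hs.ne') hq.ne').congr_deriv ?_
    field_simp
    rw [hq2]; ring
  have d4 := ((erfc_hasDerivAt _).comp t d3).const_mul (2 * h * Real.exp (-2 * h ^ 2))
  refine d4.deriv.trans ?_
  have hz : Real.exp (-h ^ 2 / (2 * t * (1 - t))) = Real.exp (-2 * h ^ 2) *
      Real.exp (-(h * (1 - 2 * t) / Real.sqrt (2 * t * (1 - t))) ^ 2) := by
    rw [← Real.exp_add]
    congr 1
    rw [div_pow, hq2]
    field_simp
    ring
  have h22 : Real.sqrt 2 ^ 2 = 2 := Real.sq_sqrt (by norm_num)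
  have h2p : 0 < Real.sqrt 2 := Real.sqrt_pos.2 (by norm_num)
  have hpi : 0 < Real.sqrt π := Real.sqrt_pos.2 Real.pi_pos
  rw [hz, h3, Real.sqrt_div (by norm_num)]
  generalize Real.exp (-(h * (1 - 2 * t) / Real.sqrt (2 * t * (1 - t))) ^ 2) = E
  rw [hqr]
  generalize Real.exp (-2 * h ^ 2) = F
  have h24 : Real.sqrt 2 ^ 4 = 4 := by
    calc _ = (Real.sqrt 2 ^ 2) ^ 2 := by ring
      _ = 4 := by rw [h22]; norm_num
  field_simp
  rw [h24]
  try ring
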